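/- arXiv:math/9907164 — 2 statements merged into one kernel-verified Lean document; each statement's English description precedes it below -/
import Mathlib

section
/- Let U be an open subset of ℝⁿ, π₁ : U × ℝⁿ → U the projection onto the first factor, and β a smooth closed 1-form on U × ℝⁿ such that the restriction of β to every fiber π₁⁻¹(u) = {u} × ℝⁿ vanishes. Then β = π₁*(β₁) for some closed 1-form β₁ on U. -/
/-!
Reshetikhin–Yakimov, Lemma 3.3 (ii):  a smooth closed `1`-form on `U × ℝⁿ` (`U ⊆ ℝⁿ`
open) whose restriction to every fiber `{u} × ℝⁿ` vanishes is the pull-back `π₁*(β₁)` of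
a closed `1`-form `β₁` on `U`.

A differential form on the open set `U × ℝⁿ ⊆ ℝⁿ × ℝⁿ` is recorded by its coefficient
functions with respect to the coordinates indexed by `Fin n ⊕ Fin n` (`Sum.inl` for the
base coordinates, `Sum.inr` for the fiber coordinates).
-/

noncomputable section

/-- The standard basis vectors of `ℝⁿ × ℝⁿ`, indexed by `Fin n ⊕ Fin n`. -/
def basisVec (n : ℕ) : Fin n ⊕ Fin n → (Fin n → ℝ) × (Fin n → ℝ)
  | Sum.inl i => (Pi.single i 1, 0)
  | Sum.inr i => (0, Pi.single i 1)

/-- The partial derivative in the `i`-th coordinate direction. -/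
def pd {n : ℕ} (i : Fin n ⊕ Fin n) (f : (Fin n → ℝ) × (Fin n → ℝ) → ℝ)
    (p : (Fin n → ℝ) × (Fin n → ℝ)) : ℝ :=
  fderiv ℝ f p (basisVec n i)

/-!
Vanishing on the fibers and closedness together say that the derivative of `β` in every vertical
direction `w` is zero: `dβ_p(w)(v) = dβ_p(v)(w)`, and the right-hand side differentiates the
function `q ↦ β_q(w)`, which is identically zero. As the fibers are connected, `β` is constant
along each of them, so it is the pullback of its restriction to any horizontal slice.
-/

open ContinuousLinearMap Module Set

section ClosedOneForm

variable {𝕜 E F G : Type*} [NontriviallyNormedField 𝕜]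
  [NormedAddCommGroup E] [NormedSpace 𝕜 E]
  [NormedAddCommGroup F] [NormedSpace 𝕜 F]
  [NormedAddCommGroup G] [NormedSpace 𝕜 G]

variable (𝕜) in
/-- The `G`-valued 1-form `ω` is closed on `s`. As in Mathlib's Poincaré lemma, a 1-form is a map
`E → E →L[𝕜] G` and `dω = 0` is the symmetry of its Fréchet derivative. The notion is meaningful
only where `ω` is differentiable, since `fderiv` is zero elsewhere. -/
def IsClosedOneFormOn (ω : E → E →L[𝕜] G) (s : Set E) : Prop :=
  ∀ p ∈ s, ∀ v w, fderiv 𝕜 ω p v w = fderiv 𝕜 ω p w v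

theorem fderiv_clm_apply_const {ω : E → F →L[𝕜] G} {p : E} (hω : DifferentiableAt 𝕜 ω p)
    (v : E) (w : F) : fderiv 𝕜 (fun q ↦ ω q w) p v = fderiv 𝕜 ω p v w := by
  simp [fderiv_clm_apply hω (differentiableAt_const w)]

theorem isClosedOneFormOn_iff_basis {ι : Type*} (b : Basis ι 𝕜 E) {ω : E → E →L[𝕜] G} {s : Set E}
    (hω : ∀ p ∈ s, DifferentiableAt 𝕜 ω p) :
    IsClosedOneFormOn 𝕜 ω s ↔ ∀ p ∈ s, ∀ i j,
      fderiv 𝕜 (fun q ↦ ω q (b j)) p (b i) = fderiv 𝕜 (fun q ↦ ω q (b i)) p (b j) := by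
  refine forall₂_congr fun p hp ↦ ?_
  simp only [fderiv_clm_apply_const (hω p hp)]
  refine ⟨fun h i j ↦ h (b i) (b j), fun h v w ↦ ?_⟩
  have symm : (fderiv 𝕜 ω p).toLinearMap₁₂ = (fderiv 𝕜 ω p).flip.toLinearMap₁₂ :=
    LinearMap.ext_basis b b h
  exact LinearMap.congr_fun₂ symm v w

theorem contDiffOn_constrL [CompleteSpace 𝕜] {ι : Type*} [Finite ι] (b : Basis ι 𝕜 F)
    {k : WithTop ℕ∞} {a : ι → E → G} {s : Set E} (ha : ∀ i, ContDiffOn 𝕜 k (a i) s) :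
    ContDiffOn 𝕜 k (fun p ↦ b.constrL (a · p)) s := by
  have := Fintype.ofFinite ι
  have := b.finiteDimensional_of_finite
  refine contDiffOn_clm_apply.2 fun v ↦ ?_
  simp only [Basis.constrL_apply]
  exact ContDiffOn.sum fun i _ ↦ (ha i).const_smul _

namespace IsClosedOneFormOn

theorem pullback_of_hasFDerivAt_const {ω : F → F →L[𝕜] G} {s : Set F} {t : Set E}
    (hω : IsClosedOneFormOn 𝕜 ω s) (hω_diff : ∀ p ∈ s, DifferentiableAt 𝕜 ω p)
    {f : E → F} {L : E →L[𝕜] F} (hf : ∀ x ∈ t, HasFDerivAt f L x) (hft : MapsTo f t s) :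
    IsClosedOneFormOn 𝕜 (fun x ↦ ω (f x) ∘L L) t := by
  intro x hx v w
  have hcomp : HasFDerivAt (fun x ↦ ω (f x)) (fderiv 𝕜 ω (f x) ∘L L) x :=
    (hω_diff (f x) (hft hx)).hasFDerivAt.comp x (hf x hx)
  have hderiv (v w) : fderiv 𝕜 (fun x ↦ ω (f x) ∘L L) x v w = fderiv 𝕜 ω (f x) (L v) (L w) := by
    simp [(hcomp.clm_comp (hasFDerivAt_const L x)).fderiv]
  simpa only [hderiv] using hω (f x) (hft hx) (L v) (L w)

theorem fderiv_comp_inr_eq_zero {ω : E × F → E × F →L[𝕜] G} {s : Set (E × F)} (hs : IsOpen s)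
    (hω : IsClosedOneFormOn 𝕜 ω s) (hω_diff : ∀ p ∈ s, DifferentiableAt 𝕜 ω p)
    (hω_fib : ∀ p ∈ s, ω p ∘L inr 𝕜 E F = 0) {p : E × F} (hp : p ∈ s) :
    fderiv 𝕜 ω p ∘L inr 𝕜 E F = 0 := by
  ext1 w
  refine ContinuousLinearMap.ext fun v ↦ ?_
  have vertical_coeff : (fun q ↦ ω q (0, w)) =ᶠ[nhds p] fun _ ↦ 0 := by
    filter_upwards [hs.mem_nhds hp] with q hq using DFunLike.congr_fun (hω_fib q hq) w
  calc fderiv 𝕜 ω p (0, w) v = fderiv 𝕜 ω p v (0, w) := hω p hp _ _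
    _ = fderiv 𝕜 (fun q ↦ ω q (0, w)) p v := (fderiv_clm_apply_const (hω_diff p hp) _ _).symm
    _ = 0 := by simp [vertical_coeff.fderiv_eq]

end IsClosedOneFormOn

end ClosedOneForm

section Pullback

variable {𝕜 E F G : Type*} [RCLike 𝕜]
  [NormedAddCommGroup E] [NormedSpace 𝕜 E]
  [NormedAddCommGroup F] [NormedSpace 𝕜 F]
  [NormedAddCommGroup G] [NormedSpace 𝕜 G]

theorem eq_of_fderiv_comp_inr_eq_zero {f : E × F → G} {x : E} {V : Set F} (hV : IsOpen V)
    (hV_conn : IsPreconnected V) (hf : ∀ y ∈ V, DifferentiableAt 𝕜 f (x, y))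
    (hf' : ∀ y ∈ V, fderiv 𝕜 f (x, y) ∘L inr 𝕜 E F = 0) {y z : F} (hy : y ∈ V) (hz : z ∈ V) :
    f (x, y) = f (x, z) := by
  let _ : NormedSpace ℝ F := NormedSpace.restrictScalars ℝ 𝕜 F
  have hderiv (y) (hy : y ∈ V) : HasFDerivAt (fun y ↦ f (x, y)) (0 : F →L[𝕜] G) y :=
    hf' y hy ▸ (hf y hy).hasFDerivAt.comp y (hasFDerivAt_prodMk_right x y)
  exact hV.is_const_of_fderiv_eq_zero hV_conn
    (fun y hy ↦ (hderiv y hy).differentiableAt.differentiableWithinAt)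
    (fun y hy ↦ (hderiv y hy).fderiv) hy hz

theorem IsClosedOneFormOn.exists_eq_comp_fst {U : Set E} {V : Set F} (hU : IsOpen U)
    (hV : IsOpen V) (hV_conn : IsConnected V) {k : WithTop ℕ∞} (hk : k ≠ 0)
    {ω : E × F → E × F →L[𝕜] G} (hω : IsClosedOneFormOn 𝕜 ω (U ×ˢ V))
    (hω_smooth : ContDiffOn 𝕜 k ω (U ×ˢ V)) (hω_fib : ∀ p ∈ U ×ˢ V, ω p ∘L inr 𝕜 E F = 0) :
    ∃ ω₁ : E → E →L[𝕜] G, ContDiffOn 𝕜 k ω₁ U ∧ IsClosedOneFormOn 𝕜 ω₁ U ∧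
      ∀ p ∈ U ×ˢ V, ω p = ω₁ p.1 ∘L fst 𝕜 E F := by
  obtain ⟨y₀, hy₀⟩ := hV_conn.nonempty
  have hUV : IsOpen (U ×ˢ V) := hU.prod hV
  have hω_diff (p) (hp : p ∈ U ×ˢ V) : DifferentiableAt 𝕜 ω p :=
    (hω_smooth.contDiffAt (hUV.mem_nhds hp)).differentiableAt hk
  have slice_mem : MapsTo (·, y₀) U (U ×ˢ V) := fun x hx ↦ ⟨hx, hy₀⟩
  refine ⟨fun x ↦ ω (x, y₀) ∘L inl 𝕜 E F, ?_, ?_, ?_⟩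
  · exact (hω_smooth.comp (contDiff_prodMk_left y₀).contDiffOn slice_mem).clm_comp contDiffOn_const
  · exact hω.pullback_of_hasFDerivAt_const hω_diff
      (fun x _ ↦ hasFDerivAt_prodMk_left x y₀) slice_mem
  · rintro ⟨x, y⟩ ⟨hx, hy⟩
    have const_on_fiber : ω (x, y) = ω (x, y₀) :=
      eq_of_fderiv_comp_inr_eq_zero hV hV_conn.isPreconnected (fun y hy ↦ hω_diff _ ⟨hx, hy⟩)
        (fun y hy ↦ hω.fderiv_comp_inr_eq_zero hUV hω_diff hω_fib ⟨hx, hy⟩) hy hy₀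
    refine ContinuousLinearMap.ext fun v ↦ ?_
    have vertical_zero : ω (x, y₀) (0, v.2) = 0 :=
      DFunLike.congr_fun (hω_fib (x, y₀) ⟨hx, hy₀⟩) v.2
    simp [const_on_fiber, ← comp_inl_add_comp_inr (ω (x, y₀)) v, vertical_zero]

theorem closed_one_form_vanishing_on_fibers_is_pullback_general {ι κ : Type*} [Finite ι] [Finite κ]
    (b : Basis ι 𝕜 E) (c : Basis κ 𝕜 F) {U : Set E} {V : Set F} (hU : IsOpen U) (hV : IsOpen V)
    (hV_conn : IsConnected V) {k : WithTop ℕ∞} (hk : k ≠ 0) {β : ι ⊕ κ → E × F → G}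
    (hβ_smooth : ∀ i, ContDiffOn 𝕜 k (β i) (U ×ˢ V))
    (hβ_closed : ∀ i j, ∀ p ∈ U ×ˢ V,
      fderiv 𝕜 (β j) p (b.prod c i) = fderiv 𝕜 (β i) p (b.prod c j))
    (hβ_fib : ∀ j, ∀ p ∈ U ×ˢ V, β (Sum.inr j) p = 0) :
    ∃ β₁ : ι → E → G, (∀ i, ContDiffOn 𝕜 k (β₁ i) U) ∧
      (∀ i j, ∀ x ∈ U, fderiv 𝕜 (β₁ i) x (b j) = fderiv 𝕜 (β₁ j) x (b i)) ∧
      ∀ i, ∀ p ∈ U ×ˢ V, β (Sum.inl i) p = β₁ i p.1 := by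
  let ω (p : E × F) : E × F →L[𝕜] G := (b.prod c).constrL (β · p)
  have hω_basis (p) (i) : ω p (b.prod c i) = β i p := (b.prod c).constrL_basis _ i
  have hω_smooth : ContDiffOn 𝕜 k ω (U ×ˢ V) := contDiffOn_constrL (b.prod c) hβ_smooth
  have hω_closed : IsClosedOneFormOn 𝕜 ω (U ×ˢ V) := by
    refine (isClosedOneFormOn_iff_basis (b.prod c) fun p hp ↦
      (hω_smooth.contDiffAt ((hU.prod hV).mem_nhds hp)).differentiableAt hk).2 fun p hp i j ↦ ?_
    simpa only [hω_basis] using hβ_closed i j p hp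
  have hω_fib (p) (hp : p ∈ U ×ˢ V) : ω p ∘L inr 𝕜 E F = 0 :=
    coe_injective <| c.ext fun j ↦ by simpa [hβ_fib j p hp] using hω_basis p (Sum.inr j)
  obtain ⟨ω₁, hω₁_smooth, hω₁_closed, hω₁⟩ :=
    hω_closed.exists_eq_comp_fst hU hV hV_conn hk hω_smooth hω_fib
  refine ⟨fun i x ↦ ω₁ x (b i), fun i ↦ hω₁_smooth.clm_apply contDiffOn_const,
    fun i j x hx ↦ ?_, fun i p hp ↦ ?_⟩
  · exact (isClosedOneFormOn_iff_basis b fun x hx ↦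
      (hω₁_smooth.contDiffAt (hU.mem_nhds hx)).differentiableAt hk).1 hω₁_closed x hx j i
  · simpa [hω₁ p hp] using (hω_basis p (Sum.inl i)).symm

end Pullback

theorem basisFun_prod_basisFun_eq_basisVec (n : ℕ) :
    ⇑((Pi.basisFun ℝ (Fin n)).prod (Pi.basisFun ℝ (Fin n))) = basisVec n := by
  ext1 (i | i) <;> simp [basisVec]

/-- **Lemma 3.3 (ii).** -/
theorem closed_one_form_vanishing_on_fibers_is_pullback
    (n : ℕ) (U : Set (Fin n → ℝ)) (hU : IsOpen U)
    (β : (Fin n ⊕ Fin n) → (Fin n → ℝ) × (Fin n → ℝ) → ℝ)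
    (hβ_smooth : ∀ i, ContDiffOn ℝ (⊤ : ℕ∞) (β i) (U ×ˢ (Set.univ : Set (Fin n → ℝ))))
    -- `dβ = 0`
    (hβ_closed : ∀ i j p, p ∈ U ×ˢ (Set.univ : Set (Fin n → ℝ)) →
      pd i (β j) p = pd j (β i) p)
    -- `β` restricted to every fiber `{u} × ℝⁿ` vanishes
    (hβ_fib : ∀ (j : Fin n) p, p ∈ U ×ˢ (Set.univ : Set (Fin n → ℝ)) →
      β (Sum.inr j) p = 0) :
    ∃ β₁ : Fin n → (Fin n → ℝ) → ℝ,
      (∀ i, ContDiffOn ℝ (⊤ : ℕ∞) (β₁ i) U) ∧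
      -- `β₁` is closed on `U`
      (∀ (i j : Fin n) (x : Fin n → ℝ), x ∈ U →
        fderiv ℝ (β₁ i) x (Pi.single j 1) = fderiv ℝ (β₁ j) x (Pi.single i 1)) ∧
      -- `β = π₁*(β₁)`
      (∀ (i : Fin n) p, p ∈ U ×ˢ (Set.univ : Set (Fin n → ℝ)) →
        β (Sum.inl i) p = β₁ i p.1) := by
  simpa using closed_one_form_vanishing_on_fibers_is_pullback_general (Pi.basisFun ℝ (Fin n))
    (Pi.basisFun ℝ (Fin n)) hU isOpen_univ isConnected_univ (by simp) hβ_smooth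
    (by simpa only [pd, basisFun_prod_basisFun_eq_basisVec] using hβ_closed) hβ_fib
end
end

section
/- Let 0 ≤ k ≤ n and let g₁, …, g_n : ℝⁿ → ℝ be smooth functions, each invariant under translations by the lattice ℤᵏ spanned by the first k standard basis vectors, such that the 1-form Σ_j g_j dxʲ is closed (i.e. ∂g_j/∂xˡ = ∂g_l/∂xʲ for all j, l). Then there exist real constants a₁, …, a_k and a smooth ℤᵏ-invariant function h : ℝⁿ → ℝ such that g_j = a_j + ∂h/∂xʲ for j = 1, …, k and g_j = ∂h/∂xʲ for j = k+1, …, n; that is, Σ_j g_j dxʲ = Σ_{j=1}^{k} a_j dxʲ + dh with dh having ℤᵏ-periodic potential. -/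
/-!
Every closed `ℤᵏ`-periodic `1`-form `Σ_j g_j dxʲ` on `ℝⁿ` (periodic in the first `k`
coordinates) is the sum of a constant-coefficient form `Σ_{j≤k} a_j dxʲ` and the
differential `dh` of a `ℤᵏ`-periodic function; this is the statement that every closed
`1`-form on `ℝ^{n−k} × (ℝᵏ/ℤᵏ)` is cohomologous to one with constant coefficients in the
angle differentials.
-/

noncomputable section

open Module

section ClosedForm

variable {E F : Type*} [NormedAddCommGroup E] [NormedSpace ℝ E]
  [NormedAddCommGroup F] [NormedSpace ℝ F]

theorem exists_contDiff_hasFDerivAt_of_fderiv_symmetric [CompleteSpace F] {m : ℕ∞} (hm : m ≠ 0)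
    {ω : E → E →L[ℝ] F} (hω : ContDiff ℝ m ω)
    (hω_closed : ∀ a x y, fderiv ℝ ω a x y = fderiv ℝ ω a y x) :
    ∃ f : E → F, ContDiff ℝ (m + 1) f ∧ ∀ x, HasFDerivAt f (ω x) x := by
  have hω_diff : Differentiable ℝ ω := hω.differentiable (by exact_mod_cast hm)
  obtain ⟨f, hf⟩ := convex_univ.exists_forall_hasFDerivAt_of_fderiv_symmetric isOpen_univ
    hω_diff.differentiableOn fun a _ ↦ hω_closed a
  replace hf : ∀ x, HasFDerivAt f (ω x) x := fun x ↦ hf x (Set.mem_univ x)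
  have hf_fderiv : fderiv ℝ f = ω := funext fun x ↦ (hf x).fderiv
  have hf_diff : Differentiable ℝ f := fun x ↦ (hf x).differentiableAt
  exact ⟨f, contDiff_succ_iff_fderiv.2 ⟨hf_diff, by simp, hf_fderiv ▸ hω⟩, hf⟩

theorem sub_eq_sub_zero_of_hasFDerivAt_of_periodic {ω : E → E →L[ℝ] F} {f : E → F} {v : E}
    (hf : ∀ x, HasFDerivAt f (ω x) x) (hω : Function.Periodic ω v) (x : E) :
    f (x + v) - f x = f v - f 0 := by
  have h_deriv (y : E) : HasFDerivAt (fun z ↦ f (z + v) - f z) (0 : E →L[ℝ] F) y := by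
    have h_shift : HasFDerivAt (fun z ↦ f (z + v)) (ω y) y :=
      (hasFDerivAt_comp_add_right v).2 (hω y ▸ hf (y + v))
    simpa only [sub_self] using h_shift.fun_sub (hf y)
  simpa only [zero_add] using is_const_of_fderiv_eq_zero (𝕜 := ℝ)
    (fun y ↦ (h_deriv y).differentiableAt) (fun y ↦ (h_deriv y).fderiv) x 0

-- The constant part `L` records the periods of a primitive `f`: since `f (x + bᵢ) - f x` does not
-- depend on `x`, subtracting a linear map with the same increments makes `f` periodic.
theorem exists_continuousLinearMap_contDiff_periodic_of_fderiv_symmetric [CompleteSpace F]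
    {ι : Type*} [Finite ι] (b : Basis ι ℝ E) (s : Set ι) {m : ℕ∞} (hm : m ≠ 0)
    {ω : E → E →L[ℝ] F} (hω : ContDiff ℝ m ω)
    (hω_closed : ∀ a x y, fderiv ℝ ω a x y = fderiv ℝ ω a y x)
    (hω_per : ∀ i ∈ s, Function.Periodic ω (b i)) :
    ∃ (L : E →L[ℝ] F) (h : E → F), ContDiff ℝ (m + 1) h ∧
      (∀ i ∈ s, Function.Periodic h (b i)) ∧ (∀ i ∉ s, L (b i) = 0) ∧
      ∀ x, HasFDerivAt h (ω x - L) x := by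
  classical
  have : FiniteDimensional ℝ E := b.finiteDimensional_of_finite
  obtain ⟨f, hf_smooth, hf⟩ := exists_contDiff_hasFDerivAt_of_fderiv_symmetric hm hω hω_closed
  let L : E →L[ℝ] F := b.constrL fun i ↦ if i ∈ s then f (b i) - f 0 else 0
  have hL (i : ι) : L (b i) = if i ∈ s then f (b i) - f 0 else 0 := b.constrL_basis _ i
  refine ⟨L, fun x ↦ f x - L x, hf_smooth.sub L.contDiff, fun i hi x ↦ ?_,
    fun i hi ↦ by rw [hL, if_neg hi], fun x ↦ (hf x).fun_sub L.hasFDerivAt⟩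
  have h_incr : f (x + b i) = f x + L (b i) := by
    rw [hL, if_pos hi, ← sub_eq_sub_zero_of_hasFDerivAt_of_periodic hf (hω_per i hi) x,
      add_sub_cancel]
  simp only [h_incr, map_add, add_sub_add_right_eq_sub]

end ClosedForm

section Coefficients

variable {ι E F : Type*} [Finite ι] [NormedAddCommGroup E] [NormedSpace ℝ E]
  [NormedAddCommGroup F] [NormedSpace ℝ F]

/-- The `1`-form `∑ j, g j dxʲ` with coefficients `g j`, where `dxʲ` is the basis dual to `b`. The
coefficients may be vector-valued. -/
def oneFormOfCoeffs (b : Basis ι ℝ E) (g : ι → E → F) (x : E) : E →L[ℝ] F :=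
  b.constrL fun j ↦ g j x

theorem oneFormOfCoeffs_apply_basis (b : Basis ι ℝ E) (g : ι → E → F) (x : E) (j : ι) :
    oneFormOfCoeffs b g x (b j) = g j x :=
  b.constrL_basis _ j

theorem oneFormOfCoeffs_eq_sum [Fintype ι] (b : Basis ι ℝ E) (g : ι → E → F) (x : E) :
    oneFormOfCoeffs b g x =
      ∑ j, ((ContinuousLinearMap.proj j).comp b.equivFunL.toContinuousLinearMap).smulRight
        (g j x) := by
  ext y
  simp [oneFormOfCoeffs, Basis.constrL_apply]

theorem contDiff_oneFormOfCoeffs (b : Basis ι ℝ E) {g : ι → E → F} {m : WithTop ℕ∞}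
    (hg : ∀ j, ContDiff ℝ m (g j)) : ContDiff ℝ m (oneFormOfCoeffs b g) := by
  have : Fintype ι := Fintype.ofFinite ι
  simp only [funext (oneFormOfCoeffs_eq_sum b g)]
  exact ContDiff.sum fun j _ ↦ contDiff_const.smulRight (hg j)

theorem differentiable_oneFormOfCoeffs (b : Basis ι ℝ E) {g : ι → E → F}
    (hg : ∀ j, Differentiable ℝ (g j)) : Differentiable ℝ (oneFormOfCoeffs b g) := by
  have : Fintype ι := Fintype.ofFinite ι
  simp only [funext (oneFormOfCoeffs_eq_sum b g)]
  exact Differentiable.fun_sum fun j _ ↦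
    (ContinuousLinearMap.smulRightL ℝ E F _).differentiable.comp (hg j)

theorem fderiv_oneFormOfCoeffs_apply_basis (b : Basis ι ℝ E) {g : ι → E → F}
    (hg : ∀ j, Differentiable ℝ (g j)) (a v : E) (j : ι) :
    fderiv ℝ (oneFormOfCoeffs b g) a v (b j) = fderiv ℝ (g j) a v := by
  have h_coeff : (fun x ↦ oneFormOfCoeffs b g x (b j)) = g j :=
    funext fun x ↦ oneFormOfCoeffs_apply_basis b g x j
  rw [← h_coeff, fderiv_clm_apply (differentiable_oneFormOfCoeffs b hg a)
    (differentiableAt_const _)]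
  simp

theorem periodic_oneFormOfCoeffs (b : Basis ι ℝ E) {g : ι → E → F} {v : E}
    (hg : ∀ j, Function.Periodic (g j) v) : Function.Periodic (oneFormOfCoeffs b g) v :=
  fun x ↦ congrArg b.constrL (funext fun j ↦ hg j x)

theorem fderiv_oneFormOfCoeffs_symmetric (b : Basis ι ℝ E) {g : ι → E → F}
    (hg : ∀ j, Differentiable ℝ (g j))
    (hg_closed : ∀ j l x, fderiv ℝ (g j) x (b l) = fderiv ℝ (g l) x (b j)) (a x y : E) :
    fderiv ℝ (oneFormOfCoeffs b g) a x y = fderiv ℝ (oneFormOfCoeffs b g) a y x := by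
  let B : E →ₗ[ℝ] E →ₗ[ℝ] F := (fderiv ℝ (oneFormOfCoeffs b g) a).toLinearMap₁₂
  have hB : B = B.flip := LinearMap.ext_basis b b fun l j ↦ by
    simpa [B, fderiv_oneFormOfCoeffs_apply_basis b hg] using hg_closed j l a
  exact LinearMap.congr_fun₂ hB x y

end Coefficients

theorem closed_periodic_one_form_eq_const_add_exact_general {ι E F : Type*} [Finite ι]
    [NormedAddCommGroup E] [NormedSpace ℝ E]
    [NormedAddCommGroup F] [NormedSpace ℝ F] [CompleteSpace F]
    (b : Basis ι ℝ E) (s : Set ι) {m : ℕ∞} (hm : m ≠ 0) {g : ι → E → F}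
    (hg_smooth : ∀ j, ContDiff ℝ m (g j))
    (hg_per : ∀ j, ∀ i ∈ s, Function.Periodic (g j) (b i))
    (hg_closed : ∀ j l x, fderiv ℝ (g j) x (b l) = fderiv ℝ (g l) x (b j)) :
    ∃ (a : ι → F) (h : E → F), ContDiff ℝ (m + 1) h ∧
      (∀ i ∈ s, Function.Periodic h (b i)) ∧ (∀ j ∉ s, a j = 0) ∧
      ∀ j x, g j x = a j + fderiv ℝ h x (b j) := by
  have hg_diff (j : ι) : Differentiable ℝ (g j) :=
    (hg_smooth j).differentiable (by exact_mod_cast hm)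
  obtain ⟨L, h, h_smooth, h_per, hL, h_deriv⟩ :=
    exists_continuousLinearMap_contDiff_periodic_of_fderiv_symmetric b s hm
      (contDiff_oneFormOfCoeffs b hg_smooth) (fderiv_oneFormOfCoeffs_symmetric b hg_diff hg_closed)
      fun i hi ↦ periodic_oneFormOfCoeffs b fun j ↦ hg_per j i hi
  refine ⟨fun j ↦ L (b j), h, h_smooth, h_per, hL, fun j x ↦ ?_⟩
  rw [(h_deriv x).fderiv, sub_apply, oneFormOfCoeffs_apply_basis, add_sub_cancel]

/-- **Closed periodic 1-forms.** -/
theorem closed_periodic_one_form_eq_const_add_exact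
    (n k : ℕ) (hk : k ≤ n)
    (g : Fin n → (Fin n → ℝ) → ℝ)
    (hg_smooth : ∀ j, ContDiff ℝ (⊤ : ℕ∞) (g j))
    -- invariance under the lattice `ℤᵏ` spanned by the first `k` basis vectors
    (hg_per : ∀ (j i : Fin n), (i : ℕ) < k →
      ∀ x, g j (x + Pi.single i 1) = g j x)
    -- closedness: `∂g_j/∂xˡ = ∂g_l/∂xʲ`
    (hg_closed : ∀ (j l : Fin n) (x : Fin n → ℝ),
      fderiv ℝ (g j) x (Pi.single l 1) = fderiv ℝ (g l) x (Pi.single j 1)) :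
    ∃ (a : Fin n → ℝ) (h : (Fin n → ℝ) → ℝ),
      ContDiff ℝ (⊤ : ℕ∞) h ∧
      -- `h` is `ℤᵏ`-invariant
      (∀ (i : Fin n), (i : ℕ) < k → ∀ x, h (x + Pi.single i 1) = h x) ∧
      -- only `a₁, …, a_k` occur
      (∀ j : Fin n, k ≤ (j : ℕ) → a j = 0) ∧
      -- `g_j = a_j + ∂h/∂xʲ`
      (∀ (j : Fin n) (x : Fin n → ℝ),
        g j x = a j + fderiv ℝ h x (Pi.single j 1)) := by
  simpa [Function.Periodic] using closed_periodic_one_form_eq_const_add_exact_general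
    (Pi.basisFun ℝ (Fin n)) {i | (i : ℕ) < k} ENat.top_ne_zero hg_smooth
    (by simpa [Function.Periodic] using hg_per) (by simpa using hg_closed)
end
end
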